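/- There exists a language that belongs to both trPCCFL and traceCFL but does not belong to shuffleCFL. -/

import Mathlib

/-- `IsInterleaving w v u` means `u` is an interleaving of `w` and `v`. -/
inductive IsInterleaving {α : Type} : List α → List α → List α → Prop
  | nil : IsInterleaving [] [] []
  | left {a : α} {w v u : List α} : IsInterleaving w v u → IsInterleaving (a :: w) v (a :: u)
  | right {a : α} {w v u : List α} : IsInterleaving w v u → IsInterleaving w (a :: v) (a :: u)

/-- Shuffle of two languages. -/
def shuffleLang {α : Type} (L K : Set (List α)) : Set (List α) :=
  {u | ∃ w ∈ L, ∃ v ∈ K, IsInterleaving w v u}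

/-- A partially-commutative context-free grammar in Greibach form. -/
structure PCGrammar (α : Type) : Type 1 where
  V : Type
  finV : Finite V
  start : V
  prods : Set (V × α × List V)
  finP : prods.Finite
  indep : V → V → Prop
  indep_symm : ∀ {X Y : V}, indep X Y → indep Y X
  indep_irrefl : ∀ X : V, ¬ indep X X

/-- `PCDerives G γ w` : configuration `γ` derives the empty configuration producing word `w`,
using production steps (at the head) and swap steps of independent adjacent nonterminals. -/
inductive PCDerives {α : Type} (G : PCGrammar α) : List G.V → List α → Prop
  | nil : PCDerives G [] []
  | prod {X : G.V} {a : α} {γ β : List G.V} {w : List α} :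
      (X, a, γ) ∈ G.prods → PCDerives G (γ ++ β) w → PCDerives G (X :: β) (a :: w)
  | swap {η β : List G.V} {X Y : G.V} {w : List α} :
      G.indep X Y → PCDerives G (η ++ Y :: X :: β) w → PCDerives G (η ++ X :: Y :: β) w

/-- The language generated by a PC-grammar. -/
def PCGrammar.lang {α : Type} (G : PCGrammar α) : Set (List α) :=
  {w | PCDerives G [G.start] w}

/-- The class of partially-commutative context-free languages. -/
def IsPCCFL {α : Type} (L : Set (List α)) : Prop :=
  ∃ G : PCGrammar α, G.lang = L

/-- The dependence relation (complement of independence) is transitive. -/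
def PCGrammar.depTransitive {α : Type} (G : PCGrammar α) : Prop :=
  ∀ X Y Z : G.V, ¬ G.indep X Y → ¬ G.indep Y Z → ¬ G.indep X Z

/-- The subclass of PCCFL given by grammars with transitive dependence. -/
def IsTrPCCFL {α : Type} (L : Set (List α)) : Prop :=
  ∃ G : PCGrammar α, G.depTransitive ∧ G.lang = L

/-- Terms of a PA-grammar (shuffle context-free grammar). -/
inductive PATerm (V : Type) : Type
  | eps : PATerm V
  | var (X : V) : PATerm V
  | seq (t u : PATerm V) : PATerm V
  | par (t u : PATerm V) : PATerm V

/-- Structural equivalence of PA-terms: associativity of both compositions,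
commutativity of parallel composition, and neutrality of the empty term. -/
inductive PAEq {V : Type} : PATerm V → PATerm V → Prop
  | refl (t : PATerm V) : PAEq t t
  | symm {t u : PATerm V} : PAEq t u → PAEq u t
  | trans {t u v : PATerm V} : PAEq t u → PAEq u v → PAEq t v
  | seq_assoc (t u v : PATerm V) : PAEq ((t.seq u).seq v) (t.seq (u.seq v))
  | par_assoc (t u v : PATerm V) : PAEq ((t.par u).par v) (t.par (u.par v))
  | par_comm (t u : PATerm V) : PAEq (t.par u) (u.par t)
  | seq_eps_left (t : PATerm V) : PAEq (PATerm.eps.seq t) t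
  | seq_eps_right (t : PATerm V) : PAEq (t.seq PATerm.eps) t
  | par_eps (t : PATerm V) : PAEq (t.par PATerm.eps) t
  | seq_congr {t t' u u' : PATerm V} : PAEq t t' → PAEq u u' → PAEq (t.seq u) (t'.seq u')
  | par_congr {t t' u u' : PATerm V} : PAEq t t' → PAEq u u' → PAEq (t.par u) (t'.par u')

/-- Single steps of a PA-grammar with production set `P`. -/
inductive PAStep {V α : Type} (P : Set (V × α × PATerm V)) : PATerm V → α → PATerm V → Prop
  | prod {X : V} {a : α} {t : PATerm V} : (X, a, t) ∈ P → PAStep P (PATerm.var X) a t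
  | seq_left {t t' u : PATerm V} {a : α} : PAStep P t a t' → PAStep P (t.seq u) a (t'.seq u)
  | par_left {t t' u : PATerm V} {a : α} : PAStep P t a t' → PAStep P (t.par u) a (t'.par u)
  | par_right {t u u' : PATerm V} {a : α} : PAStep P u a u' → PAStep P (t.par u) a (t.par u')

/-- `PAGen P t w` : term `t` derives the empty term producing word `w`
(terms are considered up to structural equivalence). -/
inductive PAGen {V α : Type} (P : Set (V × α × PATerm V)) : PATerm V → List α → Prop
  | done : PAGen P PATerm.eps []
  | eqv {t t' : PATerm V} {w : List α} : PAEq t t' → PAGen P t' w → PAGen P t w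
  | step {t t' : PATerm V} {a : α} {w : List α} :
      PAStep P t a t' → PAGen P t' w → PAGen P t (a :: w)

/-- A PA-grammar (shuffle context-free grammar). -/
structure PAGrammar (α : Type) : Type 1 where
  V : Type
  finV : Finite V
  start : V
  prods : Set (V × α × PATerm V)
  finP : prods.Finite

/-- The language generated by a PA-grammar. -/
def PAGrammar.lang {α : Type} (G : PAGrammar α) : Set (List α) :=
  {w | PAGen G.prods (PATerm.var G.start) w}

/-- The class of languages of PA-grammars (context-free grammars with shuffle). -/
def IsShuffleCFL {α : Type} (L : Set (List α)) : Prop :=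
  ∃ G : PAGrammar α, G.lang = L

/-- A single swap of two adjacent letters independent according to `J`. -/
inductive AdjSwap {α : Type} (J : α → α → Prop) : List α → List α → Prop
  | swap (x y : List α) {a b : α} : J a b → AdjSwap J (x ++ a :: b :: y) (x ++ b :: a :: y)

/-- Trace equivalence: finitely many swaps of adjacent independent letters. -/
def TraceEquiv {α : Type} (J : α → α → Prop) : List α → List α → Prop :=
  Relation.ReflTransGen (AdjSwap J)

/-- Trace closure of a language with respect to letter-independence `J`. -/
def traceClosure {α : Type} (J : α → α → Prop) (L : Set (List α)) : Set (List α) :=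
  {w | ∃ v ∈ L, TraceEquiv J v w}

/-- The class of trace closures of context-free languages. -/
def IsTraceCFL {α : Type} (L : Set (List α)) : Prop :=
  ∃ J : α → α → Prop, (∀ a b, J a b → J b a) ∧ (∀ a, ¬ J a a) ∧
    ∃ L₀ : Language α, L₀.IsContextFree ∧ traceClosure J L₀ = L

/-- `listPow s m` is the word `s^m`. -/
def listPow {α : Type} (s : List α) (m : ℕ) : List α :=
  (List.replicate m s).flatten

/-- The shuffle-pumping condition. -/
def ShufflePumping {α : Type} (L : Set (List α)) : Prop :=
  ∃ N : ℕ, ∀ w ∈ L, w.length > N →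
    ∃ x y z s t : List α,
      (∃ yt u : List α, IsInterleaving y t yt ∧ IsInterleaving (s ++ yt) z u ∧ w = x ++ u) ∧
      1 ≤ s.length ∧ (s ++ y ++ t).length ≤ N ∧
      ∀ m : ℕ, x ++ listPow s m ++ y ++ listPow t m ++ z ∈ L

/-- The concatenation-pumping condition. -/
def ConcatPumping {α : Type} (L : Set (List α)) : Prop :=
  ∃ N : ℕ, ∀ w ∈ L, w.length > N →
    ∃ x y z s t : List α,
      w = x ++ y ++ z ∧
      1 ≤ (s ++ t).length ∧ (s ++ t).length ≤ N ∧
      ∀ m : ℕ, x ++ listPow s m ++ y ++ listPow t m ++ z ∈ L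

/-!
The separating language consists of the words that begin with `a`, whose letters `a`, `b`, `d`
form a word `aᵏ bⁿ dⁿ` with `n > 0`, and whose letters `a`, `c` match like brackets, with a single
`g` at a place where no `a` is open.

If the dependence is transitive, then a PC-configuration amounts to one stack for each dependence
class. Two stacks suffice here: an `a` is read from the stack that produces `aᵏ bⁿ dⁿ`, and pushes
a `c` onto the other one. When the `b`s and `d`s commute with the `c`s and `g`, every word is
equivalent to one of the form `u bⁿ dⁿ`, where `u` is a word over `a`, `c`, `g`; such words form a
context-free language.

A derivation tree of a PA-grammar for `aᵐ bᵐ cᵐ g dᵐ` with `m` large can be pumped in the `b`s, and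
then in as many `d`s. The pumped subtree `R` also contains an `a`: a node above `R` in whose subtree
`g` occurs can be pumped in the `c`s, hence in the `a`s, and an `a` parallel to `R` could be swapped
with a `b`. Plugging the pumped context around `R` gives a tree in which the new `b`s are in
sequence or in parallel with both an `a` and a `d`, so it generates a word outside the language.
-/

/-! ### Transitive dependence: stateless multi-pushdown automata -/

section StackAutomata

variable {α V ι : Type} [DecidableEq ι]

/-- Push every nonterminal `X` of `γ` onto the stack `θ X`, keeping their order. -/
def pushAll (θ : V → ι) (γ : List V) (σ : ι → List V) : ι → List V :=
  fun i => γ.filter (θ · = i) ++ σ i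

/-- Acceptance by empty stacks of a stateless automaton with the stacks `σ`, one for each thread
in `ι`. The transition `(X, a, γ)` reads `a`, pops `X` from its stack `θ X` and pushes `γ`. -/
def StackAccepts (P : Set (V × α × List V)) (θ : V → ι) : List α → (ι → List V) → Prop
  | [], σ => ∀ i, σ i = []
  | a :: w, σ => ∃ X γ β, (X, a, γ) ∈ P ∧ σ (θ X) = X :: β ∧
      StackAccepts P θ w (pushAll θ γ (Function.update σ (θ X) β))

theorem pushAll_append (θ : V → ι) (γ δ : List V) (σ : ι → List V) :
    pushAll θ (γ ++ δ) σ = pushAll θ γ (pushAll θ δ σ) := by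
  funext i
  simp [pushAll]

theorem pushAll_middle (θ : V → ι) {X : V} {η : List V} (hη : ∀ Y ∈ η, θ Y ≠ θ X) (β : List V)
    (σ : ι → List V) : pushAll θ (η ++ X :: β) σ = pushAll θ (X :: (η ++ β)) σ := by
  funext i
  by_cases hX : θ X = i
  · subst hX
    have hfilter : η.filter (θ · = θ X) = [] := by simpa [List.filter_eq_nil_iff] using hη
    simp [pushAll, hfilter]
  · simp [pushAll, hX]

theorem update_pushAll_cons (θ : V → ι) (X : V) (β : List V) (σ : ι → List V) :
    Function.update (pushAll θ (X :: β) σ) (θ X) (pushAll θ β σ (θ X)) = pushAll θ β σ := by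
  funext i
  by_cases hi : i = θ X
  · subst hi; simp
  · simp [pushAll, hi, Ne.symm hi]

theorem stackAccepts_of_pcDerives {G : PCGrammar α} {θ : G.V → ι}
    (hθ : ∀ {X Y}, G.indep X Y → θ X ≠ θ Y) {γ : List G.V} {w : List α} (h : PCDerives G γ w) :
    StackAccepts G.prods θ w (pushAll θ γ fun _ => []) := by
  induction h with
  | nil => exact fun _ => rfl
  | @prod X a γ β w hP _ ih =>
    refine ⟨X, γ, pushAll θ β (fun _ => []) (θ X), hP, by simp [pushAll], ?_⟩
    rwa [update_pushAll_cons, ← pushAll_append]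
  | @swap η β X Y w hXY _ ih =>
    have hswap := pushAll_middle θ (X := Y) (η := [X]) (by simpa using hθ hXY) β fun _ => []
    simp only [List.cons_append, List.nil_append] at hswap
    rwa [pushAll_append, hswap, ← pushAll_append]

theorem PCDerives.move_to_front {G : PCGrammar α} {X : G.V} {w : List α} {η β : List G.V}
    (hη : ∀ Y ∈ η, G.indep Y X) (h : PCDerives G (X :: (η ++ β)) w) :
    PCDerives G (η ++ X :: β) w := by
  induction η using List.reverseRecOn generalizing β with
  | nil => exact h
  | append_singleton η Y ih =>
    simp only [List.append_assoc, List.singleton_append] at h ⊢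
    exact .swap (hη Y (by simp)) (ih (fun Z hZ => hη Z (by simp [hZ])) h)

theorem pcDerives_of_stackAccepts {G : PCGrammar α} {θ : G.V → ι}
    (hθ : ∀ {X Y}, θ X ≠ θ Y → G.indep X Y) {γ : List G.V} {w : List α}
    (h : StackAccepts G.prods θ w (pushAll θ γ fun _ => [])) : PCDerives G γ w := by
  induction w generalizing γ with
  | nil =>
    have hempty : ∀ X, γ.filter (θ · = θ X) = [] := fun X => by simpa [pushAll] using h (θ X)
    have hγ : γ = [] := List.eq_nil_iff_forall_not_mem.2 fun X hX => by
      simpa using List.filter_eq_nil_iff.1 (hempty X) X hX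
    exact hγ ▸ .nil
  | cons a w ih =>
    obtain ⟨X, δ, β, hP, hX, h⟩ := h
    obtain ⟨η, ζ, rfl, hη, -, -⟩ :=
      List.filter_eq_cons_iff.1 ((List.append_nil _).symm.trans hX)
    have hηX : ∀ Y ∈ η, θ Y ≠ θ X := fun Y hY => by simpa using hη Y hY
    refine .move_to_front (fun Y hY => hθ (hηX Y hY)) (.prod hP (ih ?_))
    rw [pushAll_middle θ hηX] at h hX
    have hβ : β = pushAll θ (η ++ ζ) (fun _ => []) (θ X) := by
      simpa [pushAll] using hX.symm
    rwa [hβ, update_pushAll_cons, ← pushAll_append] at h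

-- Up to swaps, a configuration is determined by its projections to the dependence classes.
theorem isTrPCCFL_setOf_stackAccepts [Finite V] {P : Set (V × α × List V)} (hP : P.Finite)
    (θ : V → ι) (S : V) :
    IsTrPCCFL {w | StackAccepts P θ w (pushAll θ [S] fun _ => [])} := by
  let G : PCGrammar α :=
    ⟨V, ‹_›, S, P, hP, fun X Y => θ X ≠ θ Y, Ne.symm, fun X => not_not.2 rfl⟩
  refine ⟨G, ?_, ?_⟩
  · intro X Y Z hXY hYZ
    exact not_not.2 ((not_not.1 hXY).trans (not_not.1 hYZ))
  · ext w
    exact ⟨stackAccepts_of_pcDerives (G := G) id, pcDerives_of_stackAccepts (G := G) id⟩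

/-- The stacks `l` of thread `false` and `r` of thread `true`. -/
def twoStacks (l r : List V) : Bool → List V
  | false => l
  | true => r

theorem stackAccepts_cons_twoStacks {P : Set (V × α × List V)} {θ : V → Bool} {x : α}
    {w : List α} {l r : List V} :
    StackAccepts P θ (x :: w) (twoStacks l r) ↔ ∃ X γ β, (X, x, γ) ∈ P ∧
      (θ X = false ∧ l = X :: β ∧
        StackAccepts P θ w (twoStacks (γ.filter (!θ ·) ++ β) (γ.filter θ ++ r)) ∨
      θ X = true ∧ r = X :: β ∧
        StackAccepts P θ w (twoStacks (γ.filter (!θ ·) ++ l) (γ.filter θ ++ β))) := by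
  have hleft : ∀ γ β : List V, pushAll θ γ (Function.update (twoStacks l r) false β) =
      twoStacks (γ.filter (!θ ·) ++ β) (γ.filter θ ++ r) := fun γ β => by
    funext s; cases s <;> simp [pushAll, twoStacks]
  have hright : ∀ γ β : List V, pushAll θ γ (Function.update (twoStacks l r) true β) =
      twoStacks (γ.filter (!θ ·) ++ l) (γ.filter θ ++ β) := fun γ β => by
    funext s; cases s <;> simp [pushAll, twoStacks]
  refine exists_congr fun X => exists_congr fun γ => exists_congr fun β => and_congr_right' ?_
  cases hX : θ X <;> simp [hleft, hright, twoStacks]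

end StackAutomata

/-! ### Trace equivalence -/

section Trace

variable {α : Type} {J : α → α → Prop} {u v w : List α}

theorem AdjSwap.cons (x : α) (h : AdjSwap J u v) : AdjSwap J (x :: u) (x :: v) := by
  obtain ⟨p, q, hab⟩ := h
  exact .swap (x :: p) q hab

theorem AdjSwap.filter_eq {p : α → Bool} (hp : ∀ x y, J x y → ¬ (p x ∧ p y))
    (h : AdjSwap J u v) : u.filter p = v.filter p := by
  obtain @⟨s, t, x, y, hxy⟩ := h
  have := hp x y hxy
  grind

theorem TraceEquiv.cons (x : α) (h : TraceEquiv J u v) : TraceEquiv J (x :: u) (x :: v) :=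
  h.lift (x :: ·) fun _ _ => AdjSwap.cons x

theorem TraceEquiv.trans (huv : TraceEquiv J u v) (hvw : TraceEquiv J v w) : TraceEquiv J u w :=
  Relation.ReflTransGen.trans huv hvw

theorem TraceEquiv.move_to_front {x : α} (hx : ∀ y ∈ u, J y x) :
    TraceEquiv J (u ++ x :: v) (x :: (u ++ v)) := by
  induction u with
  | nil => exact .refl
  | cons y u ih =>
    exact (TraceEquiv.cons y (ih fun z hz => hx z (by simp [hz]))).tail
      (.swap [] (u ++ v) (hx y (by simp)))

theorem TraceEquiv.filter_append_filter_not {p : α → Bool}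
    (hw : w.Pairwise fun x y => ¬ p x → p y → J y x) :
    TraceEquiv J (w.filter p ++ w.filter (!p ·)) w := by
  induction w with
  | nil => exact .refl
  | cons x w ih =>
    obtain ⟨hx, hw⟩ := List.pairwise_cons.1 hw
    by_cases hpx : p x
    · simpa [hpx] using (ih hw).cons x
    · have hfront : TraceEquiv J (w.filter p ++ x :: w.filter (!p ·))
          (x :: (w.filter p ++ w.filter (!p ·))) :=
        .move_to_front fun y hy => by
          obtain ⟨hyw, hpy⟩ := List.mem_filter.1 hy
          exact hx y hyw hpx hpy
      have hcons := ((ih hw).cons x)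
      simpa [hpx] using TraceEquiv.trans hfront hcons

end Trace

/-! ### Context-free grammars as systems of equations -/

section ContextFree

variable {T N : Type}

/-- The language of a symbol, given the languages of the nonterminals. -/
def symbolLang (I : N → Language T) : Symbol T N → Language T
  | .terminal t => {[t]}
  | .nonterminal n => I n

theorem mem_prod_map_terminal (I : N → Language T) (w : List T) :
    w ∈ ((w.map Symbol.terminal).map (symbolLang I)).prod := by
  induction w with
  | nil => exact Language.nil_mem_one
  | cons t w ih => exact Language.mem_mul.2 ⟨[t], rfl, w, ih, rfl⟩

variable (G : ContextFreeGrammar T)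

theorem contextFreeLanguage_le {I : G.NT → Language T}
    (hI : ∀ r ∈ G.rules, (r.output.map (symbolLang I)).prod ≤ I r.input) :
    G.language ≤ I G.initial := by
  have hderives : ∀ {α β}, G.Derives α β →
      (β.map (symbolLang I)).prod ≤ (α.map (symbolLang I)).prod := by
    intro α β h
    induction h with
    | refl => exact le_rfl
    | tail _ hstep ih =>
      obtain ⟨r, hr, hrew⟩ := hstep
      obtain ⟨p, q, rfl, rfl⟩ := hrew.exists_parts
      refine le_trans ?_ ih
      simp only [List.map_append, List.prod_append, List.map_cons, List.map_nil, List.prod_cons,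
        List.prod_nil, mul_one]
      gcongr
      exact hI r hr
  intro w hw
  simpa [symbolLang] using hderives hw (mem_prod_map_terminal I w)

/-- The words derived from a nonterminal. -/
def nonterminalLang (n : G.NT) : Language T :=
  {w | G.Derives [.nonterminal n] (w.map .terminal)}

variable {G}

theorem derives_of_mem_prod {σ : List (Symbol T G.NT)} {w : List T}
    (hw : w ∈ (σ.map (symbolLang (nonterminalLang G))).prod) : G.Derives σ (w.map .terminal) := by
  induction σ generalizing w with
  | nil =>
    obtain rfl : w = [] := hw
    exact .refl _
  | cons s σ ih =>
    obtain ⟨u, hu, v, hv, rfl⟩ := Language.mem_mul.1 hw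
    have hs : G.Derives [s] (u.map .terminal) := by
      cases s with
      | terminal t =>
        obtain rfl : u = [t] := hu
        exact .refl _
      | nonterminal n => exact hu
    simpa using (hs.append_right σ).trans ((ih hv).append_left (u.map .terminal))

theorem prod_le_nonterminalLang {r : ContextFreeRule T G.NT} (hr : r ∈ G.rules) :
    (r.output.map (symbolLang (nonterminalLang G))).prod ≤ nonterminalLang G r.input :=
  fun _ hw => (ContextFreeGrammar.Produces.single ⟨r, hr, .input_output⟩).trans
    (derives_of_mem_prod hw)

end ContextFree

/-! ### Derivation trees of PA-grammars -/

namespace IsInterleaving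

variable {α : Type} {u v w p q r : List α}

theorem symm (h : IsInterleaving u v w) : IsInterleaving v u w := by
  induction h with
  | nil => exact .nil
  | left _ ih => exact .right ih
  | right _ ih => exact .left ih

theorem append_left (p : List α) (h : IsInterleaving u v w) :
    IsInterleaving (p ++ u) v (p ++ w) := by
  induction p with
  | nil => exact h
  | cons x p ih => exact .left ih

theorem append_right (p : List α) (h : IsInterleaving u v w) :
    IsInterleaving u (p ++ v) (p ++ w) :=
  (h.symm.append_left p).symm

theorem nil_right (u : List α) : IsInterleaving u [] u := by
  simpa using IsInterleaving.nil.append_left u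

theorem nil_left (u : List α) : IsInterleaving [] u u :=
  (nil_right u).symm

theorem append (u v : List α) : IsInterleaving u v (u ++ v) := by
  simpa using (nil_left v).append_left u

theorem eq_left (h : IsInterleaving u [] w) : u = w := by
  generalize hv : ([] : List α) = v at h
  induction h with
  | nil => rfl
  | left _ ih => rw [ih hv]
  | right => cases hv

theorem eq_right (h : IsInterleaving [] v w) : v = w :=
  h.symm.eq_left

theorem assoc (hpr : IsInterleaving p r w) (huv : IsInterleaving u v p) :
    ∃ q, IsInterleaving v r q ∧ IsInterleaving u q w := by
  induction hpr generalizing u v with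
  | nil =>
    cases huv
    exact ⟨[], .nil, .nil⟩
  | left _ ih =>
    cases huv with
    | left huv =>
      obtain ⟨q, hvr, huq⟩ := ih huv
      exact ⟨q, hvr, .left huq⟩
    | right huv =>
      obtain ⟨q, hvr, huq⟩ := ih huv
      exact ⟨_, .left hvr, .right huq⟩
  | right _ ih =>
    obtain ⟨q, hvr, huq⟩ := ih huv
    exact ⟨_, .right hvr, .right huq⟩

theorem coe_add_coe (h : IsInterleaving u v w) : (u + v : Multiset α) = w := by
  induction h with
  | nil => rfl
  | left _ ih => simp [← Multiset.cons_coe, ← ih]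
  | right _ ih => simp [← Multiset.cons_coe, ← ih]

theorem sublist_left (h : IsInterleaving u v w) : u.Sublist w := by
  induction h with
  | nil => exact .slnil
  | left _ ih => exact ih.cons_cons _
  | right _ ih => exact ih.cons _

theorem sublist_right (h : IsInterleaving u v w) : v.Sublist w :=
  h.symm.sublist_left

end IsInterleaving

section Shuffle

variable {α : Type} (L K M : Set (List α))

theorem shuffleLang_comm : shuffleLang L K = shuffleLang K L :=
  Set.ext fun _ => ⟨fun ⟨u, hu, v, hv, h⟩ => ⟨v, hv, u, hu, h.symm⟩,
    fun ⟨u, hu, v, hv, h⟩ => ⟨v, hv, u, hu, h.symm⟩⟩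

theorem shuffleLang_assoc_subset :
    shuffleLang (shuffleLang L K) M ⊆ shuffleLang L (shuffleLang K M) := by
  rintro w ⟨_, ⟨u, hu, v, hv, huv⟩, r, hr, hw⟩
  obtain ⟨q, hvr, huq⟩ := hw.assoc huv
  exact ⟨u, hu, q, ⟨v, hv, r, hr, hvr⟩, huq⟩

theorem shuffleLang_assoc :
    shuffleLang (shuffleLang L K) M = shuffleLang L (shuffleLang K M) := by
  refine (shuffleLang_assoc_subset L K M).antisymm ?_
  rw [shuffleLang_comm L, shuffleLang_comm K, shuffleLang_comm _ M, shuffleLang_comm L]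
  exact shuffleLang_assoc_subset M K L

theorem shuffleLang_nil : shuffleLang L {[]} = L := by
  refine Set.ext fun w => ⟨?_, fun hw => ⟨w, hw, [], rfl, .nil_right w⟩⟩
  rintro ⟨u, hu, _, rfl, h⟩
  rwa [← h.eq_left]

end Shuffle

/-- Derivation trees of PA-terms for the production set `P`; `node` applies a production. -/
inductive DerivTree {V α : Type} (P : Set (V × α × PATerm V)) : PATerm V → Type
  | eps : DerivTree P .eps
  | seq {t u : PATerm V} (T : DerivTree P t) (U : DerivTree P u) : DerivTree P (t.seq u)
  | par {t u : PATerm V} (T : DerivTree P t) (U : DerivTree P u) : DerivTree P (t.par u)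
  | node {X : V} {x : α} {t : PATerm V} (h : (X, x, t) ∈ P) (T : DerivTree P t) :
      DerivTree P (.var X)

section DerivTree

variable {V α : Type} {P : Set (V × α × PATerm V)} {t u : PATerm V} {w : List α}

namespace DerivTree

/-- The words generated along a derivation tree: only the interleaving is left open. -/
def lang {t : PATerm V} : DerivTree P t → Language α
  | eps => 1
  | seq T U => T.lang * U.lang
  | par T U => shuffleLang T.lang U.lang
  | node (x := x) _ T => {[x]} * T.lang

/-- The multiset of letters of a derivation tree, common to all its words. -/
def letters {t : PATerm V} : DerivTree P t → Multiset α
  | eps => 0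
  | seq T U => T.letters + U.letters
  | par T U => T.letters + U.letters
  | node (x := x) _ T => x ::ₘ T.letters

theorem exists_mem_lang (T : DerivTree P t) : ∃ w, w ∈ T.lang := by
  induction T with
  | eps => exact ⟨[], rfl⟩
  | seq _ _ ihT ihU =>
    obtain ⟨⟨u, hu⟩, ⟨v, hv⟩⟩ := And.intro ihT ihU
    exact ⟨u ++ v, u, hu, v, hv, rfl⟩
  | par _ _ ihT ihU =>
    obtain ⟨⟨u, hu⟩, ⟨v, hv⟩⟩ := And.intro ihT ihU
    exact ⟨u ++ v, u, hu, v, hv, .append u v⟩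
  | node _ _ ih =>
    obtain ⟨u, hu⟩ := ih
    exact ⟨_, _, rfl, u, hu, rfl⟩

theorem coe_eq_letters {T : DerivTree P t} (hw : w ∈ T.lang) : (w : Multiset α) = T.letters := by
  induction T generalizing w with
  | eps =>
    obtain rfl : w = [] := hw
    rfl
  | seq _ _ ihT ihU =>
    obtain ⟨u, hu, v, hv, rfl⟩ := hw
    rw [letters, ← ihT hu, ← ihU hv]
    rfl
  | par _ _ ihT ihU =>
    obtain ⟨u, hu, v, hv, h⟩ := hw
    rw [letters, ← ihT hu, ← ihU hv, h.coe_add_coe]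
  | node _ _ ih =>
    obtain ⟨_, rfl, v, hv, rfl⟩ := hw
    rw [letters, ← ih hv]
    rfl

theorem mem_letters_iff {T : DerivTree P t} (hw : w ∈ T.lang) {x : α} :
    x ∈ T.letters ↔ x ∈ w := by
  rw [← coe_eq_letters hw, Multiset.mem_coe]

theorem exists_append_cons_mem {T : DerivTree P t} {x : α} (hx : x ∈ T.letters) :
    ∃ u v, u ++ x :: v ∈ T.lang := by
  obtain ⟨w, hw⟩ := T.exists_mem_lang
  obtain ⟨u, v, rfl⟩ := List.append_of_mem ((mem_letters_iff hw).1 hx)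
  exact ⟨u, v, hw⟩

end DerivTree

/-- The words of the derivation trees of a term. -/
def treeLang (P : Set (V × α × PATerm V)) (t : PATerm V) : Language α :=
  {w | ∃ T : DerivTree P t, w ∈ T.lang}

theorem treeLang_eps : treeLang P .eps = 1 :=
  Set.ext fun _ => ⟨fun ⟨.eps, hw⟩ => hw, fun hw => ⟨.eps, hw⟩⟩

theorem treeLang_seq : treeLang P (t.seq u) = treeLang P t * treeLang P u :=
  Set.ext fun _ => ⟨fun ⟨.seq T U, w, hw, v, hv, h⟩ => ⟨w, ⟨T, hw⟩, v, ⟨U, hv⟩, h⟩,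
    fun ⟨w, ⟨T, hw⟩, v, ⟨U, hv⟩, h⟩ => ⟨.seq T U, w, hw, v, hv, h⟩⟩

theorem treeLang_par : treeLang P (t.par u) = shuffleLang (treeLang P t) (treeLang P u) :=
  Set.ext fun _ => ⟨fun ⟨.par T U, w, hw, v, hv, h⟩ => ⟨w, ⟨T, hw⟩, v, ⟨U, hv⟩, h⟩,
    fun ⟨w, ⟨T, hw⟩, v, ⟨U, hv⟩, h⟩ => ⟨.par T U, w, hw, v, hv, h⟩⟩

theorem PAEq.treeLang_eq (h : PAEq t u) : treeLang P t = treeLang P u := by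
  induction h with
  | refl => rfl
  | symm _ ih => exact ih.symm
  | trans _ _ iht ihu => exact iht.trans ihu
  | seq_assoc => simp only [treeLang_seq, mul_assoc]
  | par_assoc =>
    simp only [treeLang_par]
    exact shuffleLang_assoc _ _ _
  | par_comm =>
    simp only [treeLang_par]
    exact shuffleLang_comm _ _
  | seq_eps_left => simp only [treeLang_seq, treeLang_eps, one_mul]
  | seq_eps_right => simp only [treeLang_seq, treeLang_eps, mul_one]
  | par_eps =>
    simp only [treeLang_par, treeLang_eps]
    exact shuffleLang_nil _
  | seq_congr _ _ iht ihu => simp only [treeLang_seq, iht, ihu]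
  | par_congr _ _ iht ihu => rw [treeLang_par, treeLang_par, iht, ihu]

theorem PAStep.cons_mem_treeLang {x : α} (h : PAStep P t x u) (hw : w ∈ treeLang P u) :
    x :: w ∈ treeLang P t := by
  induction h generalizing w with
  | prod h =>
    obtain ⟨T, hT⟩ := hw
    exact ⟨.node h T, _, rfl, w, hT, rfl⟩
  | seq_left _ ih =>
    rw [treeLang_seq] at hw ⊢
    obtain ⟨p, hp, q, hq, rfl⟩ := hw
    exact ⟨_, ih hp, q, hq, rfl⟩
  | par_left _ ih =>
    rw [treeLang_par] at hw ⊢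
    obtain ⟨p, hp, q, hq, h⟩ := hw
    exact ⟨_, ih hp, q, hq, .left h⟩
  | par_right _ ih =>
    rw [treeLang_par] at hw ⊢
    obtain ⟨p, hp, q, hq, h⟩ := hw
    exact ⟨p, hp, _, ih hq, .right h⟩

theorem PAGen.mem_treeLang (h : PAGen P t w) : w ∈ treeLang P t := by
  induction h with
  | done => exact treeLang_eps ▸ Language.nil_mem_one
  | eqv h _ ih => rwa [h.treeLang_eq]
  | step h _ ih => exact h.cons_mem_treeLang ih

theorem PAGen.seq {v : List α} (ht : PAGen P t w) (hu : PAGen P u v) :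
    PAGen P (t.seq u) (w ++ v) := by
  induction ht with
  | done => exact .eqv (.seq_eps_left _) hu
  | eqv h _ ih => exact .eqv (.seq_congr h (.refl _)) ih
  | step h _ ih => exact .step (.seq_left h) ih

theorem PAGen.par {v p : List α} (ht : PAGen P t w) (hu : PAGen P u v)
    (h : IsInterleaving w v p) : PAGen P (t.par u) p := by
  induction ht generalizing u v p with
  | done =>
    rw [← h.eq_right]
    exact .eqv (.trans (.par_comm _ _) (.par_eps _)) hu
  | eqv he _ ih => exact .eqv (.par_congr he (.refl _)) (ih hu h)
  | step ht hgen iht =>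
    induction hu generalizing p with
    | done =>
      rw [← h.eq_left]
      exact .eqv (.par_eps _) (.step ht hgen)
    | eqv he _ ihu => exact .eqv (.par_congr (.refl _) he) (ihu h)
    | step hu hgen' ihu =>
      cases h with
      | left h => exact .step (.par_left ht) (iht (.step hu hgen') h)
      | right h => exact .step (.par_right hu) (ihu h)

theorem DerivTree.paGen {T : DerivTree P t} (hw : w ∈ T.lang) : PAGen P t w := by
  induction T generalizing w with
  | eps =>
    obtain rfl : w = [] := hw
    exact .done
  | seq _ _ ihT ihU =>
    obtain ⟨u, hu, v, hv, rfl⟩ := hw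
    exact (ihT hu).seq (ihU hv)
  | par _ _ ihT ihU =>
    obtain ⟨u, hu, v, hv, h⟩ := hw
    exact (ihT hu).par (ihU hv) h
  | node h _ ih =>
    obtain ⟨_, rfl, v, hv, rfl⟩ := hw
    exact .step (.prod h) (ih hv)

theorem PAGrammar.lang_eq_treeLang (G : PAGrammar α) :
    G.lang = treeLang G.prods (.var G.start) :=
  Set.ext fun _ => ⟨fun hw => hw.mem_treeLang, fun ⟨_, hw⟩ => DerivTree.paGen hw⟩

end DerivTree

/-! ### Contexts of derivation trees -/

/-- A node of a derivation tree of `u` in which a direct subtree, of the term `t`, is missing. -/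
inductive DerivFrame {V α : Type} (P : Set (V × α × PATerm V)) : PATerm V → PATerm V → Type
  | seqLeft {t u : PATerm V} (U : DerivTree P u) : DerivFrame P t (t.seq u)
  | seqRight {t u : PATerm V} (T : DerivTree P t) : DerivFrame P u (t.seq u)
  | parLeft {t u : PATerm V} (U : DerivTree P u) : DerivFrame P t (t.par u)
  | parRight {t u : PATerm V} (T : DerivTree P t) : DerivFrame P u (t.par u)
  | node {X : V} {x : α} {t : PATerm V} (h : (X, x, t) ∈ P) : DerivFrame P t (.var X)

/-- A derivation tree of `u` in which a subtree, of the term `t`, is missing; frames are listed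
from the root to the hole. -/
inductive DerivCtx {V α : Type} (P : Set (V × α × PATerm V)) (t : PATerm V) : PATerm V → Type
  | hole : DerivCtx P t t
  | cons {s u : PATerm V} (f : DerivFrame P s u) (C : DerivCtx P t s) : DerivCtx P t u

section Context

variable {V α : Type} {P : Set (V × α × PATerm V)} {s t u : PATerm V} {x y : α}

namespace DerivFrame

/-- Plug the missing subtree into a frame. -/
def plug {t u : PATerm V} : DerivFrame P t u → DerivTree P t → DerivTree P u
  | seqLeft U, T => .seq T U
  | seqRight T, U => .seq T U
  | parLeft U, T => .par T U
  | parRight T, U => .par T U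
  | node h, T => .node h T

/-- The multiset of letters of a frame. -/
def letters {t u : PATerm V} : DerivFrame P t u → Multiset α
  | seqLeft U => U.letters
  | seqRight T => T.letters
  | parLeft U => U.letters
  | parRight T => T.letters
  | node (x := x) _ => {x}

theorem letters_plug (f : DerivFrame P t u) (T : DerivTree P t) :
    (f.plug T).letters = f.letters + T.letters := by
  cases f with
  | seqLeft | parLeft => exact add_comm _ _
  | seqRight | parRight => rfl
  | node => exact (Multiset.singleton_add _ _).symm

theorem exists_sublist {f : DerivFrame P t u} {T : DerivTree P t} {w : List α}
    (hw : w ∈ (f.plug T).lang) : ∃ v ∈ T.lang, v.Sublist w := by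
  cases f with
  | seqLeft =>
    obtain ⟨p, hp, q, -, rfl⟩ := hw
    exact ⟨p, hp, List.sublist_append_left p q⟩
  | seqRight =>
    obtain ⟨p, -, q, hq, rfl⟩ := hw
    exact ⟨q, hq, List.sublist_append_right p q⟩
  | parLeft =>
    obtain ⟨p, hp, q, -, h⟩ := hw
    exact ⟨p, hp, h.sublist_left⟩
  | parRight =>
    obtain ⟨p, -, q, hq, h⟩ := hw
    exact ⟨q, hq, h.sublist_right⟩
  | node =>
    obtain ⟨p, rfl, q, hq, rfl⟩ := hw
    exact ⟨q, hq, List.sublist_append_right _ q⟩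

theorem exists_append_append_mem (f : DerivFrame P t u) :
    ∃ p q, ∀ T : DerivTree P t, ∀ w ∈ T.lang, p ++ w ++ q ∈ (f.plug T).lang := by
  cases f with
  | seqLeft U =>
    obtain ⟨v, hv⟩ := U.exists_mem_lang
    exact ⟨[], v, fun _ w hw => ⟨w, hw, v, hv, rfl⟩⟩
  | seqRight U =>
    obtain ⟨v, hv⟩ := U.exists_mem_lang
    exact ⟨v, [], fun _ w hw => ⟨v, hv, w, hw, by simp⟩⟩
  | parLeft U =>
    obtain ⟨v, hv⟩ := U.exists_mem_lang
    exact ⟨[], v, fun _ w hw => ⟨w, hw, v, hv, .append w v⟩⟩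
  | parRight U =>
    obtain ⟨v, hv⟩ := U.exists_mem_lang
    exact ⟨v, [], fun _ w hw => ⟨v, hv, w, hw, by simpa using .append v w⟩⟩
  | @node _ x => exact ⟨[x], [], fun _ w hw => ⟨[x], rfl, w, hw, by simp⟩⟩

end DerivFrame

/-- Every word of `L` contains `x` before `y`. -/
def Precedes (L : Language α) (x y : α) : Prop :=
  ∀ w ∈ L, [x, y].Sublist w

/-- `L` contains two words which differ by a swap of adjacent letters `x` and `y`. -/
def Swappable (L : Language α) (x y : α) : Prop :=
  ∃ p q, p ++ x :: y :: q ∈ L ∧ p ++ y :: x :: q ∈ L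

theorem Swappable.symm {L : Language α} (h : Swappable L x y) : Swappable L y x :=
  let ⟨p, q, hxy, hyx⟩ := h
  ⟨p, q, hyx, hxy⟩

theorem precedes_mul {T : DerivTree P t} {U : DerivTree P u} (hx : x ∈ T.letters)
    (hy : y ∈ U.letters) : Precedes (T.lang * U.lang) x y := by
  rintro _ ⟨p, hp, q, hq, rfl⟩
  rw [DerivTree.mem_letters_iff hp, ← List.singleton_sublist] at hx
  rw [DerivTree.mem_letters_iff hq, ← List.singleton_sublist] at hy
  exact hx.append hy

theorem swappable_shuffleLang {T : DerivTree P t} {U : DerivTree P u} (hx : x ∈ T.letters)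
    (hy : y ∈ U.letters) : Swappable (shuffleLang T.lang U.lang) x y := by
  obtain ⟨p, q, hT⟩ := DerivTree.exists_append_cons_mem hx
  obtain ⟨p', q', hU⟩ := DerivTree.exists_append_cons_mem hy
  refine ⟨p ++ p', q ++ q', ⟨_, hT, _, hU, ?_⟩, ⟨_, hT, _, hU, ?_⟩⟩ <;>
    rw [List.append_assoc] <;> refine .append_left p (.append_right p' ?_)
  · exact .left (.right (.append q q'))
  · exact .right (.left (.append q q'))

theorem DerivFrame.precedes_or_swappable (f : DerivFrame P t u) (T : DerivTree P t) :
    (∀ x ∈ f.letters, ∀ y ∈ T.letters, Precedes (f.plug T).lang x y) ∨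
      (∀ x ∈ f.letters, ∀ y ∈ T.letters, Precedes (f.plug T).lang y x) ∨
      ∀ x ∈ f.letters, ∀ y ∈ T.letters, Swappable (f.plug T).lang x y := by
  cases f with
  | seqLeft => exact .inr (.inl fun x hx y hy => precedes_mul hy hx)
  | seqRight => exact .inl fun x hx y hy => precedes_mul hx hy
  | parLeft => exact .inr (.inr fun x hx y hy => (swappable_shuffleLang hy hx).symm)
  | parRight => exact .inr (.inr fun x hx y hy => swappable_shuffleLang hx hy)
  | node =>
    refine .inl fun x hx y hy => ?_
    rintro _ ⟨_, rfl, q, hq, rfl⟩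
    rw [DerivTree.mem_letters_iff hq, ← List.singleton_sublist] at hy
    obtain rfl := Multiset.mem_singleton.1 hx
    exact hy.cons_cons x

namespace DerivCtx

/-- Plug the missing subtree into a context. -/
def fill {u : PATerm V} : DerivCtx P t u → DerivTree P t → DerivTree P u
  | hole, T => T
  | cons f C, T => f.plug (C.fill T)

/-- The composition of contexts, the first one being the outer one. -/
def comp {u : PATerm V} : DerivCtx P s u → DerivCtx P t s → DerivCtx P t u
  | hole, D => D
  | cons f C, D => cons f (C.comp D)

/-- The multiset of letters of a context. -/
def letters {u : PATerm V} : DerivCtx P t u → Multiset α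
  | hole => 0
  | cons f C => f.letters + C.letters

theorem fill_comp (C : DerivCtx P s u) (D : DerivCtx P t s) (T : DerivTree P t) :
    (C.comp D).fill T = C.fill (D.fill T) := by
  induction C with
  | hole => rfl
  | cons f C ih => exact congrArg f.plug ih

theorem letters_fill (C : DerivCtx P t u) (T : DerivTree P t) :
    (C.fill T).letters = C.letters + T.letters := by
  induction C with
  | hole => simp only [fill, letters, zero_add]
  | cons f C ih => simp only [fill, letters, DerivFrame.letters_plug, ih, add_assoc]

theorem exists_sublist {C : DerivCtx P t u} {T : DerivTree P t} {w : List α}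
    (hw : w ∈ (C.fill T).lang) : ∃ v ∈ T.lang, v.Sublist w := by
  induction C generalizing w with
  | hole => exact ⟨w, hw, .refl w⟩
  | cons f C ih =>
    obtain ⟨v, hv, hvw⟩ := DerivFrame.exists_sublist hw
    obtain ⟨p, hp, hpv⟩ := ih hv
    exact ⟨p, hp, hpv.trans hvw⟩

theorem exists_append_append_mem (C : DerivCtx P t u) :
    ∃ p q, ∀ T : DerivTree P t, ∀ w ∈ T.lang, p ++ w ++ q ∈ (C.fill T).lang := by
  induction C with
  | hole => exact ⟨[], [], fun _ w hw => by simpa [fill] using hw⟩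
  | cons f C ih =>
    obtain ⟨p, q, hC⟩ := ih
    obtain ⟨p', q', hf⟩ := f.exists_append_append_mem
    exact ⟨p' ++ p, q ++ q', fun T w hw => by simpa [fill] using hf _ _ (hC T w hw)⟩

theorem exists_frame {C : DerivCtx P t u} (hx : x ∈ C.letters) :
    ∃ (s s' : PATerm V) (E : DerivCtx P s' u) (f : DerivFrame P s s') (F : DerivCtx P t s),
      C = E.comp (cons f F) ∧ x ∈ f.letters := by
  induction C with
  | hole => simp [letters] at hx
  | cons f C ih =>
    obtain hx | hx := Multiset.mem_add.1 hx
    · exact ⟨_, _, .hole, f, C, rfl, hx⟩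
    · obtain ⟨s, s', E, f', F, rfl, hf'⟩ := ih hx
      exact ⟨s, s', .cons f E, f', F, rfl, hf'⟩

end DerivCtx

theorem Precedes.fill {T : DerivTree P t} (h : Precedes T.lang x y) (C : DerivCtx P t u) :
    Precedes (C.fill T).lang x y := fun _ hw =>
  let ⟨v, hv, hvw⟩ := DerivCtx.exists_sublist hw
  (h v hv).trans hvw

theorem Swappable.fill {T : DerivTree P t} (h : Swappable T.lang x y) (C : DerivCtx P t u) :
    Swappable (C.fill T).lang x y := by
  obtain ⟨p, q, hxy, hyx⟩ := h
  obtain ⟨p', q', hC⟩ := C.exists_append_append_mem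
  exact ⟨p' ++ p, q ++ q', by simpa using hC T _ hxy, by simpa using hC T _ hyx⟩

theorem DerivCtx.exists_frame_precedes_or_swappable {C : DerivCtx P t u} (hx : x ∈ C.letters)
    (T : DerivTree P t) :
    (∀ y ∈ T.letters, Precedes (C.fill T).lang x y) ∨
      (∀ y ∈ T.letters, Precedes (C.fill T).lang y x) ∨
      ∃ (s s' : PATerm V) (E : DerivCtx P s' u) (f : DerivFrame P s s') (F : DerivCtx P t s),
        C = E.comp (cons f F) ∧ x ∈ f.letters ∧
        ∀ z ∈ f.letters, ∀ y ∈ (F.fill T).letters, Swappable (C.fill T).lang z y := by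
  obtain ⟨s, s', E, f, F, rfl, hf⟩ := exists_frame hx
  have hF : ∀ y ∈ T.letters, y ∈ (F.fill T).letters := fun y hy => by simp [letters_fill, hy]
  simp only [fill_comp, fill]
  obtain h | h | h := f.precedes_or_swappable (F.fill T)
  · exact .inl fun y hy => (h x hf y (hF y hy)).fill E
  · exact .inr (.inl fun y hy => (h x hf y (hF y hy)).fill E)
  · exact .inr (.inr ⟨s, s', E, f, F, rfl, hf, fun z hz y hy => (h z hz y hy).fill E⟩)

theorem DerivTree.count_letters_eq [DecidableEq α] {T : DerivTree P t}
    (h : ∀ w ∈ T.lang, w.count x = w.count y) : T.letters.count x = T.letters.count y := by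
  obtain ⟨w, hw⟩ := T.exists_mem_lang
  simpa only [← coe_eq_letters hw, Multiset.coe_count] using h w hw

theorem DerivCtx.count_letters_eq [DecidableEq α]
    (h : ∀ T : DerivTree P t, T.letters.count x = T.letters.count y) (E : DerivCtx P s t)
    (C : DerivCtx P s s) (N : DerivTree P s) : C.letters.count x = C.letters.count y := by
  have hC := h (E.fill (C.fill N))
  have hN := h (E.fill N)
  simp only [letters_fill, Multiset.count_add] at hC hN
  omega

end Context

/-! ### Pumping -/

/-- The number of variables of a term. -/
def PATerm.width {V : Type} : PATerm V → ℕ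
  | eps => 0
  | var _ => 1
  | seq t u | par t u => t.width + u.width

section Pumping

variable {V α : Type} {P : Set (V × α × PATerm V)} {s t u : PATerm V} {x : α} {r : ℕ}

/-- The variables at the roots of subtrees of a derivation tree. -/
def DerivTree.vars (T : DerivTree P t) : Set V :=
  {X | ∃ (C : DerivCtx P (.var X) t) (N : DerivTree P (.var X)), C.fill N = T}

theorem DerivFrame.vars_subset (f : DerivFrame P t u) (T : DerivTree P t) :
    T.vars ⊆ (f.plug T).vars := by
  rintro X ⟨C, N, rfl⟩
  exact ⟨.cons f C, N, rfl⟩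

theorem DerivFrame.width_le (hP : ∀ p ∈ P, p.2.2.width ≤ r) (f : DerivFrame P t u)
    (hu : u.width ≤ r) : t.width ≤ r := by
  cases f with
  | node h => exact hP _ h
  | _ => simp only [PATerm.width] at hu; omega

theorem DerivCtx.width_le (hP : ∀ p ∈ P, p.2.2.width ≤ r) (C : DerivCtx P t u) (hu : u.width ≤ r) :
    t.width ≤ r := by
  induction C with
  | hole => exact hu
  | cons f _ ih => exact ih (f.width_le hP hu)

theorem DerivCtx.vars_subset (C : DerivCtx P t u) (T : DerivTree P t) :
    T.vars ⊆ (C.fill T).vars := by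
  rintro X ⟨D, N, rfl⟩
  exact ⟨C.comp D, N, C.fill_comp D N⟩

/-- The number of nodes of a derivation tree, the measure for inductions over subtrees. -/
def DerivTree.size {t : PATerm V} : DerivTree P t → ℕ
  | eps => 1
  | seq T U | par T U => T.size + U.size + 1
  | node _ T => T.size + 1

theorem DerivCtx.size_le_size_fill (C : DerivCtx P t u) (T : DerivTree P t) :
    T.size ≤ (C.fill T).size := by
  induction C with
  | hole => exact le_rfl
  | cons f C ih => cases f <;> simp only [fill, DerivFrame.plug, DerivTree.size] <;> omega

/-- In the derivation tree `T`, the letter `x` lies between two occurrences of a variable on the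
same branch: the context between them can be iterated. -/
def DerivTree.Pumpable (T : DerivTree P t) (x : α) : Prop :=
  ∃ (X : V) (E : DerivCtx P (.var X) t) (C : DerivCtx P (.var X) (.var X))
    (N : DerivTree P (.var X)), T = E.fill (C.fill N) ∧ x ∈ C.letters

theorem DerivTree.Pumpable.fill {T : DerivTree P t} (h : T.Pumpable x) (D : DerivCtx P t u) :
    (D.fill T).Pumpable x := by
  obtain ⟨X, E, C, N, rfl, hx⟩ := h
  exact ⟨X, D.comp E, C, N, (D.fill_comp E _).symm, hx⟩

theorem add_le_add_mul_pow {k m n i j l v w : ℕ} (hk : 0 < k) (hm : m ≤ v * k ^ i)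
    (hn : n ≤ w * k ^ j) (hi : i ≤ l) (hj : j ≤ l) : m + n ≤ (v + w) * k ^ l := by
  rw [add_mul]
  exact add_le_add (hm.trans (by gcongr)) (hn.trans (by gcongr))

theorem DerivTree.ncard_vars_lt [Finite V] {X : V} (h : (X, x, t) ∈ P) {T : DerivTree P t}
    (hX : X ∉ T.vars) : T.vars.ncard < (DerivTree.node h T).vars.ncard :=
  Set.ncard_lt_ncard ⟨DerivFrame.vars_subset (.node h) T, fun hle => hX (hle ⟨.hole, _, rfl⟩)⟩

theorem DerivTree.count_letters_node_le [Finite V] [DecidableEq α] {X : V} {y : α}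
    (h : (X, y, t) ∈ P) (ht : t.width ≤ r) {T : DerivTree P t} (hX : X ∉ T.vars)
    (hT : T.letters.count x ≤ t.width * (r + 1) ^ T.vars.ncard) :
    (node h T).letters.count x ≤ (r + 1) ^ (node h T).vars.ncard :=
  calc (y ::ₘ T.letters).count x ≤ 1 + T.letters.count x := by
        rw [Multiset.count_cons]
        split_ifs <;> omega
    _ ≤ (r + 1) ^ T.vars.ncard + r * (r + 1) ^ T.vars.ncard := by
        gcongr
        · exact Nat.one_le_pow _ _ r.succ_pos
        · exact hT.trans (Nat.mul_le_mul_right _ ht)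
    _ = (r + 1) ^ (T.vars.ncard + 1) := by ring
    _ ≤ (r + 1) ^ (node h T).vars.ncard :=
        Nat.pow_le_pow_right r.succ_pos (ncard_vars_lt h hX)

/-- Without pumping, a branch forks off new occurrences of `x` only below the last visit of a
variable, and each variable is visited for the last time only once. -/
theorem DerivTree.count_letters_le [Finite V] [DecidableEq α] (hP : ∀ p ∈ P, p.2.2.width ≤ r)
    {t : PATerm V} (T : DerivTree P t) (hx : ¬ T.Pumpable x) :
    T.letters.count x ≤ t.width * (r + 1) ^ T.vars.ncard := by
  match T with
  | eps => simp [letters]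
  | seq T U =>
    rw [letters, Multiset.count_add]
    exact add_le_add_mul_pow r.succ_pos
      (count_letters_le hP T fun h => hx (h.fill (.cons (.seqLeft U) .hole)))
      (count_letters_le hP U fun h => hx (h.fill (.cons (.seqRight T) .hole)))
      (Set.ncard_le_ncard (DerivFrame.vars_subset (.seqLeft U) T))
      (Set.ncard_le_ncard (DerivFrame.vars_subset (.seqRight T) U))
  | par T U =>
    rw [letters, Multiset.count_add]
    exact add_le_add_mul_pow r.succ_pos
      (count_letters_le hP T fun h => hx (h.fill (.cons (.parLeft U) .hole)))
      (count_letters_le hP U fun h => hx (h.fill (.cons (.parRight T) .hole)))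
      (Set.ncard_le_ncard (DerivFrame.vars_subset (.parLeft U) T))
      (Set.ncard_le_ncard (DerivFrame.vars_subset (.parRight T) U))
  | @node _ _ _ X _ _ h T =>
    rw [PATerm.width, one_mul]
    by_cases hX : X ∈ T.vars
    · obtain ⟨C, N, hT⟩ := hX
      have hsize : N.size ≤ T.size := hT ▸ C.size_le_size_fill N
      have hN := count_letters_le hP N
      subst hT
      let D : DerivCtx P (.var X) (.var X) := .cons (.node h) C
      have hD : D.letters.count x = 0 :=
        Multiset.count_eq_zero.2 fun hD => hx ⟨X, .hole, D, N, rfl, hD⟩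
      calc (D.fill N).letters.count x = N.letters.count x := by
            rw [D.letters_fill, Multiset.count_add, hD, zero_add]
        _ ≤ 1 * (r + 1) ^ N.vars.ncard := hN fun h' => hx (h'.fill D)
        _ ≤ (r + 1) ^ (D.fill N).vars.ncard := by
            rw [one_mul]
            exact Nat.pow_le_pow_right r.succ_pos (Set.ncard_le_ncard (D.vars_subset N))
    · exact count_letters_node_le h (hP _ h) hX
        (count_letters_le hP T fun h' => hx (h'.fill (.cons (.node h) .hole)))
  termination_by T.size
  decreasing_by all_goals simp only [size]; omega

theorem DerivTree.pumpable_of_lt_count [Finite V] [DecidableEq α]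
    (hP : ∀ p ∈ P, p.2.2.width ≤ r) (ht : t.width ≤ r) {T : DerivTree P t}
    (hT : r * (r + 1) ^ Nat.card V < T.letters.count x) : T.Pumpable x := by
  by_contra hx
  have hvars : T.vars.ncard ≤ Nat.card V :=
    Set.ncard_univ V ▸ Set.ncard_le_ncard (Set.subset_univ T.vars)
  refine hT.not_ge ((count_letters_le hP T hx).trans ?_)
  gcongr
  omega

end Pumping

/-! ### The separating language -/

/-- The alphabet of the separating language. -/
inductive Letter
  | a | b | c | g | d
  deriving DecidableEq

namespace Letter

instance : Finite Letter :=
  Finite.of_surjective ![a, b, c, g, d] fun x => by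
    cases x <;> simp [Fin.exists_fin_succ]

/-- The letters of the left thread: its words are `aᵏ bⁿ dⁿ`. -/
def onLeft : Letter → Bool
  | a | b | d => true
  | c | g => false

/-- The letters of the right thread, in which every `a` is matched by a later `c`. -/
def onRight : Letter → Bool
  | a | c | g => true
  | b | d => false

/-- The order of the letters in the words `aᵐ bᵐ cᵐ g dᵐ`. -/
def rank : Letter → ℕ
  | a => 0
  | b => 1
  | c => 2
  | g => 3
  | d => 4

end Letter

open Letter

/-- With `i` unmatched `a`s and, if `f` holds, one `g` to come, the word `w` can be completed:
every `c` matches an `a`, and `g` is read when all `a`s so far are matched. -/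
def Matched : ℕ → Bool → List Letter → Prop
  | i, f, [] => i = 0 ∧ f = false
  | i, f, a :: w => Matched (i + 1) f w
  | i, f, c :: w => ∃ j, i = j + 1 ∧ Matched j f w
  | i, f, g :: w => i = 0 ∧ f = true ∧ Matched 0 false w
  | i, f, b :: w => Matched i f w
  | i, f, d :: w => Matched i f w

/-- The language separating `trPCCFL ∩ traceCFL` from `shuffleCFL`. -/
def separatingLang : Set (List Letter) :=
  {w | w.head? = some a ∧
    (∃ k n, w.filter onLeft =
      List.replicate k a ++ List.replicate (n + 1) b ++ List.replicate (n + 1) d) ∧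
    Matched 0 true w}

theorem Matched.count_eq {i : ℕ} {f : Bool} {w : List Letter} (h : Matched i f w) :
    i + w.count a = w.count c := by
  fun_induction Matched i f w <;> grind

theorem Matched.count_eq_of_append_g {i : ℕ} {f : Bool} {u v : List Letter}
    (h : Matched i f (u ++ g :: v)) : i + u.count a = u.count c := by
  induction u generalizing i f with
  | nil => simp_all [Matched]
  | cons x u ih => cases x <;> grind [Matched]

theorem matched_filter_onRight {i : ℕ} {f : Bool} {w : List Letter} :
    Matched i f (w.filter onRight) ↔ Matched i f w := by
  induction w generalizing i f with
  | nil => rfl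
  | cons x w ih => cases x <;> simp [Matched, List.filter_cons, onRight, ih]

section separatingLang

variable {u v w : List Letter}

theorem pairwise_filter_onLeft (hw : w ∈ separatingLang) :
    (w.filter onLeft).Pairwise (rank · ≤ rank ·) := by
  obtain ⟨-, ⟨k, n, h⟩, -⟩ := hw
  simp only [h, List.pairwise_append, List.pairwise_replicate, List.mem_append, List.mem_replicate]
  refine ⟨⟨by simp, by simp, ?_⟩, by simp, ?_⟩ <;> grind [rank]

theorem not_sublist_of_mem {x y : Letter} (hw : w ∈ separatingLang) (hx : x.onLeft) (hy : y.onLeft)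
    (hxy : y.rank < x.rank) : ¬ [x, y].Sublist w := fun h => by
  have hfilter : [x, y].Sublist (w.filter onLeft) := by simpa [hx, hy] using h.filter onLeft
  have := (pairwise_filter_onLeft hw).sublist hfilter
  simp only [List.pairwise_pair] at this
  omega

theorem count_a_eq_count_c (hw : w ∈ separatingLang) : w.count a = w.count c := by
  simpa using hw.2.2.count_eq

theorem count_b_eq_count_d (hw : w ∈ separatingLang) : w.count b = w.count d := by
  obtain ⟨-, ⟨k, n, h⟩, -⟩ := hw
  have hb : (w.filter onLeft).count b = w.count b := List.count_filter rfl
  have hd : (w.filter onLeft).count d = w.count d := List.count_filter rfl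
  simp [← hb, ← hd, h, List.count_replicate]

theorem count_a_eq_count_c_of_append_g (hw : u ++ g :: v ∈ separatingLang) :
    u.count a = u.count c := by
  simpa using hw.2.2.count_eq_of_append_g

end separatingLang

/-- The word `aᵐ⁺¹ bᵐ⁺¹ cᵐ⁺¹ g dᵐ⁺¹`. -/
def blockWord (m : ℕ) : List Letter :=
  List.replicate (m + 1) a ++ List.replicate (m + 1) b ++ List.replicate (m + 1) c ++
    g :: List.replicate (m + 1) d

theorem blockWord_mem (m : ℕ) : blockWord m ∈ separatingLang := by
  have hmatched : ∀ k i,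
      Matched i true (List.replicate k a ++ (List.replicate (i + k) c ++ [g])) := by
    intro k
    induction k with
    | zero =>
      intro i
      induction i with
      | zero => simp [Matched]
      | succ i ih => simpa [List.replicate_succ, Matched] using ih
    | succ k ih =>
      intro i
      have := ih (i + 1)
      rw [show i + 1 + k = i + (k + 1) by omega] at this
      simpa [List.replicate_succ, Matched] using this
  refine ⟨by simp [blockWord, List.replicate_succ], ⟨m + 1, m, ?_⟩, ?_⟩
  · simp [blockWord, List.filter_replicate, onLeft]
  · rw [← matched_filter_onRight]
    simpa [blockWord, List.filter_replicate, List.filter_cons, onRight] using hmatched (m + 1) 0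

theorem not_sublist_blockWord {m : ℕ} {x y : Letter} (hxy : y.rank < x.rank) :
    ¬ [x, y].Sublist (blockWord m) := fun h => by
  have hsorted : (blockWord m).Pairwise (rank · ≤ rank ·) := by
    simp only [blockWord, List.pairwise_append, List.pairwise_cons, List.pairwise_replicate,
      List.mem_append, List.mem_replicate]
    grind [rank]
  have := hsorted.sublist h
  simp only [List.pairwise_pair] at this
  omega

/-! ### The separating language is in `trPCCFL` -/

/-- The phases of the left thread, which reads `aᵏ bⁿ⁺¹ dⁿ⁺¹`: before the first `b`, after `m + 1`
letters `b` and before the first `d`, and with `m` letters `d` to come. -/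
inductive Phase
  | beforeB
  | afterB (m : ℕ)
  | afterD (m : ℕ)

namespace Phase

/-- The words that may follow in a given phase. -/
def words : Phase → Set (List Letter)
  | beforeB => {w | ∃ k n, w = List.replicate k a ++ List.replicate (n + 1) b ++
      List.replicate (n + 1) d}
  | afterB m => {w | ∃ n, w = List.replicate n b ++ List.replicate (n + m + 1) d}
  | afterD m => {List.replicate m d}

variable {t : Phase} {w : List Letter}

theorem nil_mem_words : [] ∈ t.words ↔ t = afterD 0 := by
  cases t with
  | afterD m => cases m <;> simp [words, List.replicate_succ]
  | _ => simp [words, List.replicate_succ]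

theorem a_cons_mem_words : a :: w ∈ t.words ↔ t = beforeB ∧ w ∈ beforeB.words := by
  cases t with
  | beforeB =>
    constructor
    · rintro ⟨_ | k, n, h⟩
      · simp [List.replicate_succ] at h
      · exact ⟨rfl, k, n, by simpa [List.replicate_succ] using h⟩
    · rintro ⟨-, k, n, rfl⟩
      exact ⟨k + 1, n, rfl⟩
  | afterB m =>
    suffices h : ∀ n, a :: w ≠ List.replicate n b ++ List.replicate (n + m + 1) d by simpa [words]
    rintro (_ | n) <;> simp [List.replicate_succ]
  | afterD m => cases m <;> simp [words, List.replicate_succ]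

theorem b_cons_mem_words : b :: w ∈ t.words ↔
    (t = beforeB ∧ w ∈ (afterB 0).words) ∨ ∃ m, t = afterB m ∧ w ∈ (afterB (m + 1)).words := by
  cases t with
  | beforeB =>
    suffices h : b :: w ∈ beforeB.words ↔ w ∈ (afterB 0).words by simpa
    constructor
    · rintro ⟨_ | k, n, h⟩
      · exact ⟨n, by simpa [List.replicate_succ] using h⟩
      · simp [List.replicate_succ] at h
    · rintro ⟨n, rfl⟩
      exact ⟨0, n, rfl⟩
  | afterB m =>
    suffices h : b :: w ∈ (afterB m).words ↔ w ∈ (afterB (m + 1)).words by simpa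
    constructor
    · rintro ⟨_ | n, h⟩
      · simp [List.replicate_succ] at h
      · exact ⟨n, by grind⟩
    · rintro ⟨n, rfl⟩
      exact ⟨n + 1, by grind⟩
  | afterD m => cases m <;> simp [words, List.replicate_succ]

theorem d_cons_mem_words : d :: w ∈ t.words ↔
    ∃ m, (t = afterB m ∨ t = afterD (m + 1)) ∧ w ∈ (afterD m).words := by
  cases t with
  | beforeB =>
    suffices h : d :: w ∉ beforeB.words by simpa
    rintro ⟨_ | k, n, h⟩ <;> simp [List.replicate_succ] at h
  | afterB m =>
    suffices h : d :: w ∈ (afterB m).words ↔ w ∈ (afterD m).words by simpa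
    constructor
    · rintro ⟨_ | n, h⟩
      · simpa [words, List.replicate_succ] using h
      · simp [List.replicate_succ] at h
    · rintro rfl
      exact ⟨0, by simp [List.replicate_succ]⟩
  | afterD m => cases m <;> simp [words, List.replicate_succ]

end Phase

/-- The completions of a prefix that leaves the left thread in phase `t`, and the right thread
with `i` unmatched `a`s and, if `f` holds, without its `g`. -/
def completions (t : Phase) (i : ℕ) (f : Bool) : Set (List Letter) :=
  {w | w.filter onLeft ∈ t.words ∧ Matched i f w}

section completions

variable {t : Phase} {i : ℕ} {f : Bool} {w : List Letter}

theorem nil_mem_completions : [] ∈ completions t i f ↔ t = .afterD 0 ∧ i = 0 ∧ f = false := by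
  simp [completions, Matched, Phase.nil_mem_words]

theorem a_cons_mem_completions :
    a :: w ∈ completions t i f ↔ t = .beforeB ∧ w ∈ completions .beforeB (i + 1) f := by
  simp [completions, Matched, List.filter_cons, onLeft, Phase.a_cons_mem_words, and_assoc]

theorem b_cons_mem_completions : b :: w ∈ completions t i f ↔
    (t = .beforeB ∧ w ∈ completions (.afterB 0) i f) ∨
      ∃ m, t = .afterB m ∧ w ∈ completions (.afterB (m + 1)) i f := by
  have hfilter : (b :: w).filter onLeft = b :: w.filter onLeft := rfl
  grind [completions, Matched, Phase.b_cons_mem_words]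

theorem c_cons_mem_completions :
    c :: w ∈ completions t i f ↔ ∃ j, i = j + 1 ∧ w ∈ completions t j f :=
  ⟨fun ⟨hl, j, hj, hr⟩ => ⟨j, hj, hl, hr⟩, fun ⟨j, hj, hl, hr⟩ => ⟨hl, j, hj, hr⟩⟩

theorem g_cons_mem_completions :
    g :: w ∈ completions t i f ↔ i = 0 ∧ f = true ∧ w ∈ completions t 0 false :=
  and_left_comm.trans (and_congr_right fun _ => and_left_comm)

theorem d_cons_mem_completions : d :: w ∈ completions t i f ↔
    (∃ m, t = .afterB m ∧ w ∈ completions (.afterD m) i f) ∨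
      ∃ m, t = .afterD (m + 1) ∧ w ∈ completions (.afterD m) i f := by
  have hfilter : (d :: w).filter onLeft = d :: w.filter onLeft := rfl
  grind [completions, Matched, Phase.d_cons_mem_words]

theorem mem_separatingLang_iff :
    w ∈ separatingLang ↔ ∃ v, w = a :: v ∧ v ∈ completions .beforeB 1 true := by
  have hcompl : w ∈ separatingLang ↔ w.head? = some a ∧ w ∈ completions .beforeB 0 true := Iff.rfl
  cases w with
  | nil => simp [hcompl]
  | cons x w =>
    rw [hcompl]
    constructor
    · rintro ⟨hx, h⟩
      obtain rfl : x = a := by simpa using hx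
      exact ⟨w, rfl, (a_cons_mem_completions.1 h).2⟩
    · rintro ⟨v, hv, h⟩
      obtain ⟨rfl, rfl⟩ := List.cons.inj hv
      exact ⟨rfl, a_cons_mem_completions.2 ⟨rfl, h⟩⟩

end completions

/-- The nonterminals of a PC-grammar for the separating language. -/
inductive Nonterm
  | S | X | Y | D | C | G

namespace Nonterm

instance : Finite Nonterm :=
  Finite.of_surjective ![S, X, Y, D, C, G] fun x => by
    cases x <;> simp [Fin.exists_fin_succ]

/-- The nonterminals `C` and `G`, which produce letters outside of the left thread. -/
def isRight : Nonterm → Bool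
  | C | G => true
  | S | X | Y | D => false

end Nonterm

section trPCCFL

open Nonterm

/-- The productions of a PC-grammar for the separating language. -/
def pcProductions : Set (Nonterm × Letter × List Nonterm) :=
  {(S, a, [X, C, G]), (X, a, [X, C]), (X, b, [Y]), (Y, b, [Y, D]), (Y, d, []), (D, d, []),
    (C, c, []), (G, g, [])}

theorem mem_pcProductions {Z : Nonterm} {l : Letter} {γ : List Nonterm} :
    (Z, l, γ) ∈ pcProductions ↔ match l with
      | a => Z = S ∧ γ = [X, C, G] ∨ Z = X ∧ γ = [X, C]
      | b => Z = X ∧ γ = [Y] ∨ Z = Y ∧ γ = [Y, D]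
      | c => Z = C ∧ γ = []
      | g => Z = G ∧ γ = []
      | d => Z = Y ∧ γ = [] ∨ Z = D ∧ γ = [] := by
  cases l <;> simp [pcProductions]

/-- The left stack in a given phase. -/
def Phase.stack : Phase → List Nonterm
  | beforeB => [X]
  | afterB m => Y :: List.replicate m D
  | afterD m => List.replicate m D


theorem Phase.stack_eq_X_cons {t : Phase} {β : List Nonterm} :
    t.stack = X :: β ↔ t = beforeB ∧ β = [] := by
  cases t with
  | afterD m => cases m <;> simp [stack, List.replicate_succ]
  | _ => simp [stack, eq_comm]

theorem Phase.stack_eq_Y_cons {t : Phase} {β : List Nonterm} :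
    t.stack = Y :: β ↔ ∃ m, t = afterB m ∧ β = List.replicate m D := by
  cases t with
  | afterD m => cases m <;> simp [stack, List.replicate_succ]
  | _ => simp [stack, eq_comm]

theorem Phase.stack_eq_D_cons {t : Phase} {β : List Nonterm} :
    t.stack = D :: β ↔ ∃ m, t = afterD (m + 1) ∧ β = List.replicate m D := by
  cases t with
  | afterD m => cases m <;> simp [stack, List.replicate_succ, eq_comm]
  | _ => simp [stack]

theorem Phase.stack_ne_S_cons {t : Phase} {β : List Nonterm} : t.stack ≠ S :: β := by
  cases t with
  | afterD m => cases m <;> simp [stack, List.replicate_succ]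
  | _ => simp [stack]

/-- The right stack with `i` unmatched `a`s and, if `f` holds, one `g` to come. -/
def rightStack (i : ℕ) (f : Bool) : List Nonterm :=
  List.replicate i C ++ if f then [G] else []

theorem rightStack_eq_C_cons {i : ℕ} {f : Bool} {β : List Nonterm} :
    rightStack i f = C :: β ↔ ∃ j, i = j + 1 ∧ β = rightStack j f := by
  cases i <;> cases f <;> simp [rightStack, List.replicate_succ, eq_comm]

theorem rightStack_eq_G_cons {i : ℕ} {f : Bool} {β : List Nonterm} :
    rightStack i f = G :: β ↔ i = 0 ∧ f = true ∧ β = rightStack 0 false := by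
  cases i <;> cases f <;> simp [rightStack, List.replicate_succ, eq_comm]

theorem stackAccepts_iff_mem_completions {t : Phase} {i : ℕ} {f : Bool} {w : List Letter} :
    StackAccepts pcProductions isRight w (twoStacks t.stack (rightStack i f)) ↔
      w ∈ completions t i f := by
  induction w generalizing t i f with
  | nil =>
    have hempty : t.stack = [] ↔ t = .afterD 0 := by cases t <;> simp [Phase.stack]
    simp [StackAccepts, nil_mem_completions, twoStacks, hempty, rightStack]
  | cons x w ih =>
    rw [stackAccepts_cons_twoStacks]
    cases x with
    | a =>
      have hXC : StackAccepts pcProductions isRight w (twoStacks [X] (C :: rightStack i f)) ↔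
        w ∈ completions .beforeB (i + 1) f := ih (t := .beforeB) (i := i + 1)
      simp [mem_pcProductions, or_and_right, exists_or, isRight, List.filter_cons, and_assoc,
        Phase.stack_eq_X_cons, Phase.stack_ne_S_cons, a_cons_mem_completions, hXC]
    | b =>
      have hY : StackAccepts pcProductions isRight w (twoStacks [Y] (rightStack i f)) ↔
        w ∈ completions (.afterB 0) i f := ih (t := .afterB 0)
      have hYD : ∀ m, StackAccepts pcProductions isRight w
        (twoStacks (Y :: D :: List.replicate m D) (rightStack i f)) ↔
          w ∈ completions (.afterB (m + 1)) i f := fun m => ih (t := .afterB (m + 1))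
      simp [mem_pcProductions, or_and_right, exists_or, isRight, and_assoc, Phase.stack_eq_X_cons,
        Phase.stack_eq_Y_cons, b_cons_mem_completions, hY, hYD]
    | c =>
      simp [mem_pcProductions, isRight, and_assoc, rightStack_eq_C_cons, c_cons_mem_completions, ih]
    | g =>
      simp [mem_pcProductions, isRight, and_assoc, rightStack_eq_G_cons, g_cons_mem_completions, ih]
    | d =>
      have hD : ∀ m, StackAccepts pcProductions isRight w
        (twoStacks (List.replicate m D) (rightStack i f)) ↔
          w ∈ completions (.afterD m) i f := fun m => ih (t := .afterD m)
      simp [mem_pcProductions, or_and_right, exists_or, isRight, and_assoc, Phase.stack_eq_Y_cons,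
        Phase.stack_eq_D_cons, d_cons_mem_completions, hD]

theorem isTrPCCFL_separatingLang : IsTrPCCFL separatingLang := by
  have hstart : separatingLang =
      {w | StackAccepts pcProductions isRight w (pushAll isRight [S] fun _ => [])} := by
    ext w
    have hS : (pushAll isRight [S] fun _ => []) = twoStacks [S] [] := by
      funext s; cases s <;> rfl
    have hXCG : ∀ v, StackAccepts pcProductions isRight v (twoStacks [X] [C, G]) ↔
        v ∈ completions .beforeB 1 true := fun v =>
      stackAccepts_iff_mem_completions (t := .beforeB) (i := 1) (f := true)
    cases w with
    | nil => simp [hS, mem_separatingLang_iff, StackAccepts, twoStacks]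
    | cons x w =>
      cases x <;> simp [hS, mem_separatingLang_iff, stackAccepts_cons_twoStacks,
        mem_pcProductions, isRight, List.filter_cons, hXCG, or_and_right, exists_or, and_assoc]
  rw [hstart]
  exact isTrPCCFL_setOf_stackAccepts (by simp [pcProductions]) isRight S

end trPCCFL

/-! ### The separating language is in `traceCFL` -/

/-- Letters are independent if no thread contains both of them. -/
def threadIndep (x y : Letter) : Prop :=
  ¬ (x.onLeft ∧ y.onLeft) ∧ ¬ (x.onRight ∧ y.onRight)

theorem mem_separatingLang_of_adjSwap {u v : List Letter} (h : AdjSwap threadIndep u v)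
    (hu : u ∈ separatingLang) : v ∈ separatingLang := by
  obtain ⟨hhead, hleft, hright⟩ := hu
  refine ⟨?_, h.filter_eq (p := onLeft) (fun _ _ hxy => hxy.1) ▸ hleft, ?_⟩
  · obtain @⟨s, t, x, y, hxy⟩ := h
    cases s with
    | nil =>
      obtain rfl : x = a := by simpa using hhead
      cases y <;> simp [threadIndep, onLeft, onRight] at hxy
    | cons z s => simpa using hhead
  · rwa [← matched_filter_onRight, ← h.filter_eq (p := onRight) (fun _ _ hxy => hxy.2),
      matched_filter_onRight]

theorem traceEquiv_filter_onRight {w : List Letter} (hw : w ∈ separatingLang) :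
    TraceEquiv threadIndep (w.filter onRight ++ w.filter (!onRight ·)) w := by
  refine .filter_append_filter_not ((List.pairwise_filter.1 (pairwise_filter_onLeft hw)).imp ?_)
  intro x y
  cases x <;> cases y <;> simp [threadIndep, onLeft, onRight, rank]

/-- The nonterminals of a context-free grammar for representatives of the separating language. -/
inductive CFNonterm
  | start | dyck | block
  deriving DecidableEq

/-- A context-free grammar for the words `u bⁿ⁺¹ dⁿ⁺¹` of the separating language with `u` a
word of the right thread. -/
def cfGrammar : ContextFreeGrammar Letter where
  NT := CFNonterm
  initial := .start
  rules := {
    ⟨.start, [.terminal a, .nonterminal .dyck, .terminal c, .nonterminal .dyck, .terminal g,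
      .nonterminal .dyck, .nonterminal .block]⟩,
    ⟨.dyck, []⟩,
    ⟨.dyck, [.terminal a, .nonterminal .dyck, .terminal c, .nonterminal .dyck]⟩,
    ⟨.block, [.terminal b, .nonterminal .block, .terminal d]⟩,
    ⟨.block, [.terminal b, .terminal d]⟩}

/-- Upper bounds for the languages of the nonterminals of `cfGrammar`. -/
def cfBound : CFNonterm → Language Letter
  | .start => separatingLang
  | .dyck => {u | (∀ x ∈ u, x = a ∨ x = c) ∧ ∀ i f v, Matched i f v → Matched i f (u ++ v)}
  | .block => {u | ∃ n, u = List.replicate (n + 1) b ++ List.replicate (n + 1) d}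

theorem exists_filter_eq_replicate {u : List Letter} (hu : u ∈ cfBound .dyck) :
    ∃ k, u.filter onLeft = List.replicate k a := by
  refine ⟨_, List.eq_replicate_iff.2 ⟨rfl, fun x hx => ?_⟩⟩
  obtain ⟨hxu, hxleft⟩ := List.mem_filter.1 hx
  obtain rfl | rfl := hu.1 x hxu
  · rfl
  · simp [onLeft] at hxleft

theorem mem_separatingLang_of_parts {p q r z : List Letter} (hp : p ∈ cfBound .dyck)
    (hq : q ∈ cfBound .dyck) (hr : r ∈ cfBound .dyck) (hz : z ∈ cfBound .block) :
    a :: (p ++ c :: (q ++ g :: (r ++ z))) ∈ separatingLang := by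
  obtain ⟨k, hk⟩ := exists_filter_eq_replicate hp
  obtain ⟨l, hl⟩ := exists_filter_eq_replicate hq
  obtain ⟨m, hm⟩ := exists_filter_eq_replicate hr
  obtain ⟨n, rfl⟩ := hz
  have hz : Matched 0 false (List.replicate (n + 1) b ++ List.replicate (n + 1) d) := by
    rw [← matched_filter_onRight]
    simp [onRight, Matched]
  refine ⟨rfl, ⟨1 + (k + (l + m)), n, ?_⟩, ?_⟩
  · simp only [List.replicate_add]
    simp [List.filter_cons, List.filter_replicate, hk, hl, hm, onLeft,
      -List.replicate_append_replicate]
  · have hg : Matched 0 true (q ++ g :: (r ++ _)) := hq.2 _ _ _ ⟨rfl, rfl, hr.2 _ _ _ hz⟩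
    exact hp.2 1 true _ ⟨0, rfl, hg⟩

theorem mem_cfGrammar_rules {r : ContextFreeRule Letter CFNonterm} :
    r ∈ cfGrammar.rules ↔
      r = ⟨.start, [.terminal a, .nonterminal .dyck, .terminal c, .nonterminal .dyck, .terminal g,
        .nonterminal .dyck, .nonterminal .block]⟩ ∨
      r = ⟨.dyck, []⟩ ∨
      r = ⟨.dyck, [.terminal a, .nonterminal .dyck, .terminal c, .nonterminal .dyck]⟩ ∨
      r = ⟨.block, [.terminal b, .nonterminal .block, .terminal d]⟩ ∨
      r = ⟨.block, [.terminal b, .terminal d]⟩ := by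
  change r ∈ ({_, _, _, _, _} : Finset (ContextFreeRule Letter CFNonterm)) ↔ _
  simp only [Finset.mem_insert, Finset.mem_singleton]

theorem block_succ (n : ℕ) :
    [b] ++ (List.replicate (n + 1) b ++ List.replicate (n + 1) d ++ [d]) =
      List.replicate (n + 2) b ++ List.replicate (n + 2) d := by
  rw [List.replicate_succ (n := n + 1), List.replicate_succ' (n := n + 1)]
  simp

theorem cfGrammar_language_le : cfGrammar.language ≤ separatingLang := by
  refine contextFreeLanguage_le cfGrammar (I := cfBound) fun r hr w hw => ?_
  obtain rfl | rfl | rfl | rfl | rfl := mem_cfGrammar_rules.1 hr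
  · obtain ⟨_, rfl, _, ⟨p, hp, _, ⟨_, rfl, _, ⟨q, hq, _, ⟨_, rfl, _, ⟨r, hr, _, ⟨z, hz, _, rfl,
      rfl⟩, rfl⟩, rfl⟩, rfl⟩, rfl⟩, rfl⟩, rfl⟩ := hw
    have hmem := mem_separatingLang_of_parts hp hq hr hz
    rwa [← List.append_nil z] at hmem
  · obtain rfl : w = [] := hw
    exact ⟨by simp, fun _ _ _ => id⟩
  · obtain ⟨_, rfl, _, ⟨p, hp, _, ⟨_, rfl, _, ⟨q, hq, _, rfl, rfl⟩, rfl⟩, rfl⟩, rfl⟩ := hw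
    refine ⟨?_, fun i f v hv => ?_⟩
    · have := hp.1
      have := hq.1
      grind
    · have hc : Matched (i + 1) f (p ++ c :: (q ++ v)) := hp.2 _ _ _ ⟨i, rfl, hq.2 i f v hv⟩
      simpa [Matched] using hc
  · obtain ⟨_, rfl, _, ⟨_, ⟨n, rfl⟩, _, ⟨_, rfl, _, rfl, rfl⟩, rfl⟩, rfl⟩ := hw
    exact ⟨n + 1, block_succ n⟩
  · obtain ⟨_, rfl, _, ⟨_, rfl, _, rfl, rfl⟩, rfl⟩ := hw
    exact ⟨0, rfl⟩

/-- The words of matched `a`s and `c`s. -/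
abbrev dyckWords : Language Letter := nonterminalLang cfGrammar .dyck

/-- The words `bⁿ⁺¹ dⁿ⁺¹`. -/
abbrev blockWords : Language Letter := nonterminalLang cfGrammar .block

/-- The right thread as a product: Dyck words separated by `i` unmatched `c`s, followed if `f`
holds by `g` and a last Dyck word. -/
def rightThread (i : ℕ) (f : Bool) : Language Letter :=
  dyckWords * ({[c]} * dyckWords) ^ i *
    if f then {[g]} * dyckWords else 1

theorem one_le_dyckWords : 1 ≤ dyckWords :=
  prod_le_nonterminalLang (mem_cfGrammar_rules.2 (.inr (.inl rfl)))

theorem dyckWords_mul_le : {[a]} * (dyckWords * ({[c]} * dyckWords)) ≤ dyckWords := by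
  have hle : {[a]} * (dyckWords * ({[c]} * (dyckWords * 1))) ≤ dyckWords :=
    prod_le_nonterminalLang (mem_cfGrammar_rules.2 (.inr (.inr (.inl rfl))))
  simpa only [mul_one] using hle

theorem mul_blockWords_le : {[a]} * rightThread 1 true * blockWords ≤ cfGrammar.language := by
  have hle : {[a]} * (dyckWords * ({[c]} * (dyckWords * ({[g]} * (dyckWords *
      (blockWords * 1)))))) ≤ cfGrammar.language :=
    prod_le_nonterminalLang (mem_cfGrammar_rules.2 (.inl rfl))
  simpa only [rightThread, pow_one, if_true, mul_assoc, mul_one] using hle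

theorem mem_rightThread {i : ℕ} {f : Bool} {u : List Letter} (h : Matched i f u)
    (hu : ∀ x ∈ u, x.onRight) : u ∈ rightThread i f := by
  induction u generalizing i f with
  | nil =>
    obtain ⟨rfl, rfl⟩ := h
    simp only [rightThread, pow_zero, mul_one, Bool.false_eq_true, if_false]
    exact one_le_dyckWords Language.nil_mem_one
  | cons x u ih =>
    have ih := fun {i f} h => ih (i := i) (f := f) h fun y hy => hu y (by simp [hy])
    cases x with
    | b | d => simpa [onRight] using hu _ (List.mem_cons_self ..)
    | a =>
      have hle : {[a]} * rightThread (i + 1) f ≤ rightThread i f := by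
        simp only [rightThread, pow_succ', ← mul_assoc]
        gcongr
        simpa only [mul_assoc] using dyckWords_mul_le
      exact hle (Language.append_mem_mul (Set.mem_singleton [a]) (ih h))
    | c =>
      obtain ⟨i, rfl, h⟩ := h
      have hle : {[c]} * rightThread i f ≤ rightThread (i + 1) f := by
        have := mul_le_mul_left one_le_dyckWords ({[c]} * rightThread i f)
        simpa only [rightThread, pow_succ', ← mul_assoc, one_mul] using this
      exact hle (Language.append_mem_mul (Set.mem_singleton [c]) (ih h))
    | g =>
      obtain ⟨rfl, rfl, h⟩ := h
      have hle : {[g]} * rightThread 0 false ≤ rightThread 0 true := by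
        have := mul_le_mul_left one_le_dyckWords ({[g]} * rightThread 0 false)
        simpa [rightThread] using this
      exact hle (Language.append_mem_mul (Set.mem_singleton [g]) (ih h))

theorem mem_blockWords (n : ℕ) : List.replicate (n + 1) b ++ List.replicate (n + 1) d ∈
    blockWords := by
  induction n with
  | zero =>
    exact prod_le_nonterminalLang (mem_cfGrammar_rules.2 (.inr (.inr (.inr (.inr rfl)))))
      (mem_prod_map_terminal _ [b, d])
  | succ n ih =>
    exact prod_le_nonterminalLang (mem_cfGrammar_rules.2 (.inr (.inr (.inr (.inl rfl)))))
      ⟨[b], rfl, _, ⟨_, ih, [d], ⟨[d], rfl, [], rfl, rfl⟩, rfl⟩, block_succ n⟩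

theorem filter_onRight_append_mem_language {w : List Letter} (hw : w ∈ separatingLang) :
    w.filter onRight ++ w.filter (!onRight ·) ∈ cfGrammar.language := by
  obtain ⟨hhead, ⟨k, n, hleft⟩, hright⟩ := hw
  obtain ⟨v, rfl⟩ : ∃ v, w = a :: v := by
    cases w <;> simp_all
  have hblock : (a :: v).filter (!onRight ·) =
      List.replicate (n + 1) b ++ List.replicate (n + 1) d := by
    have := congrArg (List.filter (!onRight ·)) hleft
    rw [List.filter_filter, show (fun x => !onRight x && onLeft x) = (!onRight ·) by
      funext x; cases x <;> rfl] at this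
    simpa [onRight] using this
  have hthread : v.filter onRight ∈ rightThread 1 true :=
    mem_rightThread (matched_filter_onRight.2 hright) fun x hx => (List.mem_filter.1 hx).2
  have hmem := Language.append_mem_mul (Language.append_mem_mul (Set.mem_singleton [a]) hthread)
    (mem_blockWords n)
  rw [hblock]
  exact mul_blockWords_le hmem

theorem isTraceCFL_separatingLang : IsTraceCFL separatingLang := by
  refine ⟨threadIndep, ?_, ?_, cfGrammar.language, ⟨cfGrammar, rfl⟩, Set.ext fun w => ⟨?_, ?_⟩⟩
  · exact fun x y h => ⟨fun hl => h.1 hl.symm, fun hr => h.2 hr.symm⟩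
  · rintro (_ | _) <;> simp [threadIndep, onLeft, onRight]
  · rintro ⟨v, hv, hvw⟩
    induction hvw with
    | refl => exact cfGrammar_language_le hv
    | tail _ hswap ih => exact mem_separatingLang_of_adjSwap hswap ih
  · exact fun hw => ⟨_, filter_onRight_append_mem_language hw, traceEquiv_filter_onRight hw⟩

/-! ### The separating language is not in `shuffleCFL` -/

section NotShuffle

variable {V : Type} {P : Set (V × Letter × PATerm V)} {t u : PATerm V} {r m : ℕ}

theorem not_swappable_g {L : Language Letter} (hL : L ≤ separatingLang) {x : Letter}
    (hx : x = a ∨ x = c) : ¬ Swappable L x g := by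
  rintro ⟨p, q, hxg, hgx⟩
  have hp := count_a_eq_count_c_of_append_g (hL hgx)
  have hpx : (p ++ [x]).count a = (p ++ [x]).count c :=
    count_a_eq_count_c_of_append_g (v := q) (by simpa using hL hxg)
  obtain rfl | rfl := hx <;> simp [hp] at hpx

theorem not_swappable_of_rank_lt {L : Language Letter} (hL : L ≤ separatingLang) {x y : Letter}
    (hx : x.onLeft) (hy : y.onLeft) (hxy : y.rank < x.rank) : ¬ Swappable L x y :=
  fun ⟨p, q, h, _⟩ => not_sublist_of_mem (hL h) hx hy hxy (by simp)

theorem not_precedes_of_rank_lt {T : DerivTree P t} (hT : T.lang ≤ separatingLang) {x y : Letter}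
    (hx : x.onLeft) (hy : y.onLeft) (hxy : y.rank < x.rank) : ¬ Precedes T.lang x y := fun h =>
  let ⟨_, hw⟩ := T.exists_mem_lang
  not_sublist_of_mem (hT hw) hx hy hxy (h _ hw)

theorem not_precedes_of_blockWord_mem {L : Language Letter} (hL : blockWord m ∈ L) {x y : Letter}
    (hxy : y.rank < x.rank) : ¬ Precedes L x y :=
  fun h => not_sublist_blockWord hxy (h _ hL)

variable (hlang : ∀ T : DerivTree P t, T.lang ≤ separatingLang)
include hlang

-- A `c` outside `U` would have to come before `b`, after `d`, or be swappable with `g`. So `U`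
-- contains all `c`s and can be pumped there, which needs `a`s.
theorem a_mem_letters_of_g_mem [Finite V] (hP : ∀ p ∈ P, p.2.2.width ≤ r) (ht : t.width ≤ r)
    (hm : r * (r + 1) ^ Nat.card V < m + 1) {E : DerivCtx P u t} {U : DerivTree P u}
    (hword : blockWord m ∈ (E.fill U).lang) (hb : b ∈ U.letters) (hg : g ∈ U.letters)
    (hd : d ∈ U.letters) : a ∈ U.letters := by
  have hcE : c ∉ E.letters := fun hc => by
    obtain h | h | ⟨_, _, _, _, F, rfl, hcf, h⟩ := DerivCtx.exists_frame_precedes_or_swappable hc U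
    · exact not_precedes_of_blockWord_mem hword (by decide) (h b hb)
    · exact not_precedes_of_blockWord_mem hword (by decide) (h d hd)
    · exact not_swappable_g (hlang _) (.inr rfl) (h c hcf g (by simp [DerivCtx.letters_fill, hg]))
  have hcU : U.letters.count c = m + 1 := by
    have hcount := congrArg (Multiset.count c) (DerivTree.coe_eq_letters hword)
    rw [DerivCtx.letters_fill, Multiset.count_add, Multiset.count_eq_zero.2 hcE] at hcount
    simpa [blockWord, List.count_cons, List.count_replicate] using hcount.symm
  obtain ⟨X, D, C, N, rfl, hcC⟩ :=
    DerivTree.pumpable_of_lt_count hP (E.width_le hP ht) (hcU ▸ hm)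
  have hac : C.letters.count a = C.letters.count c :=
    DerivCtx.count_letters_eq
      (fun T => T.count_letters_eq fun _ hw => count_a_eq_count_c (hlang T hw))
      (E.comp D) C N
  have haC : a ∈ C.letters := by
    rwa [← Multiset.count_pos, hac, Multiset.count_pos]
  simp [DerivCtx.letters_fill, haC]

-- A `g` outside `R` is in parallel with `R`, below a node to which the previous lemma applies.
theorem a_mem_letters [Finite V] (hP : ∀ p ∈ P, p.2.2.width ≤ r) (ht : t.width ≤ r)
    (hm : r * (r + 1) ^ Nat.card V < m + 1) {E : DerivCtx P u t} {R : DerivTree P u}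
    (hword : blockWord m ∈ (E.fill R).lang) (hb : b ∈ R.letters) (hd : d ∈ R.letters) :
    a ∈ R.letters := by
  by_cases hgR : g ∈ R.letters
  · exact a_mem_letters_of_g_mem hlang hP ht hm hword hb hgR hd
  have hgE : g ∈ E.letters := by
    have hg : g ∈ (E.fill R).letters :=
      (DerivTree.mem_letters_iff hword).2 (by simp [blockWord])
    rw [DerivCtx.letters_fill] at hg
    exact (Multiset.mem_add.1 hg).resolve_right hgR
  obtain h | h | ⟨_, _, E, f, F, rfl, hgf, h⟩ := DerivCtx.exists_frame_precedes_or_swappable hgE R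
  · exact (not_precedes_of_blockWord_mem hword (by decide) (h b hb)).elim
  · exact (not_precedes_of_blockWord_mem hword (by decide) (h d hd)).elim
  have hF : ∀ x ∈ R.letters, x ∈ (F.fill R).letters := fun x hx => by
    simp [DerivCtx.letters_fill, hx]
  have ha : a ∈ f.letters + (F.fill R).letters := by
    rw [← DerivFrame.letters_plug]
    rw [DerivCtx.fill_comp, DerivCtx.fill] at hword
    refine a_mem_letters_of_g_mem hlang hP ht hm hword ?_ ?_ ?_ <;>
      simp only [DerivFrame.letters_plug, Multiset.mem_add, hgf, hF _ hb, hF _ hd, or_true, true_or]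
  obtain ha | ha := Multiset.mem_add.1 ha
  · exact (not_swappable_of_rank_lt (hlang _) rfl rfl (by decide) (h a ha b (hF b hb)).symm).elim
  · exact (not_swappable_g (hlang _) (.inl rfl) (h g hgf a ha).symm).elim

-- Pumping `b` also pumps `d`, so a copy of `C` is plugged around a tree with both an `a` and a
-- `d`; wherever the `b`s of the copy are placed, some word has `b` before `a` or `d` before `b`.
theorem blockWord_notMem [Finite V] (hP : ∀ p ∈ P, p.2.2.width ≤ r) (ht : t.width ≤ r)
    (hm : r * (r + 1) ^ Nat.card V < m + 1) (T : DerivTree P t) : blockWord m ∉ T.lang := by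
  intro hword
  have hbT : T.letters.count b = m + 1 := by
    rw [← DerivTree.coe_eq_letters hword, Multiset.coe_count]
    simp [blockWord, List.count_replicate]
  obtain ⟨X, E, C, N, rfl, hbC⟩ := DerivTree.pumpable_of_lt_count hP ht (hbT ▸ hm)
  have hbd : C.letters.count b = C.letters.count d :=
    DerivCtx.count_letters_eq
      (fun T => T.count_letters_eq fun _ hw => count_b_eq_count_d (hlang T hw))
      E C N
  have hdC : d ∈ C.letters := by
    rwa [← Multiset.count_pos, ← hbd, Multiset.count_pos]
  have hbR : b ∈ (C.fill N).letters := by simp [DerivCtx.letters_fill, hbC]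
  have hdR : d ∈ (C.fill N).letters := by simp [DerivCtx.letters_fill, hdC]
  have haR : a ∈ (C.fill N).letters := a_mem_letters hlang hP ht hm hword hbR hdR
  have hpump := hlang (E.fill (C.fill (C.fill N)))
  obtain h | h | ⟨_, _, _, _, F, -, hbf, h⟩ :=
    DerivCtx.exists_frame_precedes_or_swappable hbC (C.fill N)
  · exact not_precedes_of_rank_lt hpump rfl rfl (by decide) ((h a haR).fill E)
  · exact not_precedes_of_rank_lt hpump rfl rfl (by decide) ((h d hdR).fill E)
  · exact not_swappable_of_rank_lt hpump rfl rfl (by decide)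
      ((h b hbf a (by simp [DerivCtx.letters_fill F, haR])).fill E)

end NotShuffle

theorem not_isShuffleCFL_separatingLang : ¬ IsShuffleCFL separatingLang := by
  rintro ⟨G, hG⟩
  rw [G.lang_eq_treeLang] at hG
  have := G.finV
  obtain ⟨r, hr⟩ := (G.finP.image fun p => p.2.2.width).bddAbove
  have hP : ∀ p ∈ G.prods, p.2.2.width ≤ r + 1 :=
    fun p hp => (hr (Set.mem_image_of_mem _ hp)).trans r.le_succ
  have hlang : ∀ T : DerivTree G.prods (.var G.start), T.lang ≤ separatingLang :=
    fun T w hw => hG.le ⟨T, hw⟩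
  obtain ⟨T, hT⟩ := hG.ge (blockWord_mem ((r + 1) * (r + 1 + 1) ^ Nat.card G.V))
  exact blockWord_notMem hlang hP (Nat.le_add_left 1 r) (Nat.lt_succ_self _) T hT

/-- some language is in trPCCFL ∩ traceCFL but not in shuffleCFL. -/
theorem exists_trpccfl_tracecfl_not_shufflecfl :
    ∃ (α : Type) (_ : Finite α) (L : Set (List α)),
      IsTrPCCFL L ∧ IsTraceCFL L ∧ ¬ IsShuffleCFL L := by
  exact ⟨Letter, inferInstance, separatingLang, isTrPCCFL_separatingLang,
    isTraceCFL_separatingLang, not_isShuffleCFL_separatingLang⟩
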